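/- Every charming rectifiable space has a dense rectifiable subspace that is a Lindelöf Σ-space: if G is a rectifiable space with rectification φ, right neutral element e, and operations p = π₂ ∘ φ⁻¹ and q = π₂ ∘ φ, and G is a charming space, then there exists a dense subset H of G with e ∈ H, p(H × H) ⊆ H and q(H × H) ⊆ H, such that H with the subspace topology is a Lindelöf Σ-space. -/

import Mathlib

open Set Function TopologicalSpace

universe u

/-- A map between topological spaces is *perfect* if it is continuous, closed, and
every fiber is compact. -/
def PerfectMap {Y : Type*} {Z : Type*} [TopologicalSpace Y] [TopologicalSpace Z]
    (f : Y → Z) : Prop :=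
  Continuous f ∧ IsClosedMap f ∧ ∀ z : Z, IsCompact (f ⁻¹' {z})

/-- A topological space `X` is a *Lindelöf Σ-space* if there exist a topological space `Y`,
a continuous surjection from `Y` onto `X`, and a perfect surjection from `Y` onto some
second-countable space. -/
def IsLindelofSigma (X : Type u) [TopologicalSpace X] : Prop :=
  ∃ (Y : Type u) (tY : TopologicalSpace Y) (Z : Type u) (tZ : TopologicalSpace Z),
    @SecondCountableTopology Z tZ ∧
    (∃ f : Y → X, @Continuous Y X tY _ f ∧ Surjective f) ∧
    (∃ g : Y → Z, @PerfectMap Y Z tY tZ g ∧ Surjective g)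

/-- A topological space `X` is a *charming space* if there is a subset `Y` of `X` that is a
Lindelöf Σ-space in the subspace topology and such that for every open `U ⊇ Y`,
the set `X \ U` is a Lindelöf Σ-space in the subspace topology. -/
def IsCharming (X : Type u) [TopologicalSpace X] : Prop :=
  ∃ Y : Set X, IsLindelofSigma Y ∧
    ∀ U : Set X, IsOpen U → Y ⊆ U → IsLindelofSigma ↥(Uᶜ)

/-- A *CL-charming* space: the shell `Y` can be chosen closed. -/
def IsCLCharming (X : Type u) [TopologicalSpace X] : Prop :=
  ∃ Y : Set X, IsClosed Y ∧ IsLindelofSigma Y ∧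
    ∀ U : Set X, IsOpen U → Y ⊆ U → IsLindelofSigma ↥(Uᶜ)

/-- A *CO-charming* space: the shell `Y` can be chosen compact. -/
def IsCOCharming (X : Type u) [TopologicalSpace X] : Prop :=
  ∃ Y : Set X, IsCompact Y ∧ IsLindelofSigma Y ∧
    ∀ U : Set X, IsOpen U → Y ⊆ U → IsLindelofSigma ↥(Uᶜ)

/-- A space has a *countable network* if there is a countable family `N` of subsets such that
every point in every open set `V` is contained in a member of `N` contained in `V`. -/
def HasCountableNetwork (X : Type u) [TopologicalSpace X] : Prop :=
  ∃ N : Set (Set X), N.Countable ∧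
    ∀ x : X, ∀ V : Set X, IsOpen V → x ∈ V → ∃ n ∈ N, x ∈ n ∧ n ⊆ V

/-- A topological space `X` is *weak (4,4)-structured* if there exist a topological space `Y`,
a continuous surjection from `Y` onto `X`, and a perfect surjection from `Y` onto some
charming space. -/
def IsWeak44Structured (X : Type u) [TopologicalSpace X] : Prop :=
  ∃ (Y : Type u) (tY : TopologicalSpace Y) (M : Type u) (tM : TopologicalSpace M),
    @IsCharming M tM ∧
    (∃ f : Y → X, @Continuous Y X tY _ f ∧ Surjective f) ∧
    (∃ g : Y → M, @PerfectMap Y M tY tM g ∧ Surjective g)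

/-!
Lindelöf Σ-spaces are stable under continuous images, finite products and countable unions, so a
Lindelöf Σ-subspace generates, under countably many continuous operations, a subspace that is again
Lindelöf Σ. Hence it suffices to find a dense Lindelöf Σ-subspace of `G`. If the shell of `G` is not
dense, then some point has a closed neighbourhood missing the shell, since rectifiable spaces are
regular; this neighbourhood is Lindelöf Σ. By homogeneity every point has a Lindelöf Σ-neighbourhood
and, `G` being Lindelöf, countably many of these cover `G`, which is then itself Lindelöf Σ.
-/

open scoped Topology

section ProperMaps

theorem perfectMap_iff_isProperMap {Y Z : Type*} [TopologicalSpace Y] [TopologicalSpace Z]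
    {f : Y → Z} : PerfectMap f ↔ IsProperMap f :=
  isProperMap_iff_isClosedMap_and_compact_fibers.symm

theorem isProperMap_sigmaMap {ι : Type*} {Y Z : ι → Type*} [∀ i, TopologicalSpace (Y i)]
    [∀ i, TopologicalSpace (Z i)] {g : ∀ i, Y i → Z i} (hg : ∀ i, IsProperMap (g i)) :
    IsProperMap (Sigma.map id g) := by
  refine isProperMap_iff_isClosedMap_and_compact_fibers.2
    ⟨.sigma_map fun i => (hg i).continuous, fun C hC => isClosed_sigma_iff.2 fun i => ?_, ?_⟩
  · have image_fiber : Sigma.mk i ⁻¹' (Sigma.map id g '' C) = g i '' (Sigma.mk i ⁻¹' C) := by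
      ext z
      constructor
      · rintro ⟨⟨j, y⟩, hy, ⟨⟩⟩
        exact ⟨y, hy, rfl⟩
      · rintro ⟨y, hy, rfl⟩
        exact ⟨⟨i, y⟩, hy, rfl⟩
    rw [image_fiber]
    exact (hg i).isClosedMap _ (isClosed_sigma_iff.1 hC i)
  · rintro ⟨i, z⟩
    have fiber_eq : Sigma.map id g ⁻¹' {⟨i, z⟩} = Sigma.mk i '' (g i ⁻¹' {z}) := by
      rw [image_sigmaMk_preimage_sigmaMap injective_id, image_singleton]
      rfl
    rw [fiber_eq]
    exact ((hg i).isCompact_preimage isCompact_singleton).image continuous_sigmaMk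

theorem lindelofSpace_of_isProperMap {Y Z : Type*} [TopologicalSpace Y] [TopologicalSpace Z]
    [LindelofSpace Z] {g : Y → Z} (hg : IsProperMap g) : LindelofSpace Y := by
  refine ⟨fun F _ _ _ => ?_⟩
  obtain ⟨z, hz⟩ := cluster_point_of_Lindelof (Filter.map g F)
  obtain ⟨y, -, hy⟩ := hg.clusterPt_of_mapClusterPt hz
  exact ⟨y, mem_univ y, hy⟩

end ProperMaps

namespace IsLindelofSigma

variable {X X' : Type u} [TopologicalSpace X] [TopologicalSpace X']

theorem of_surjective (hX : IsLindelofSigma X) {f : X → X'} (hf : Continuous f)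
    (hsurj : Surjective f) : IsLindelofSigma X' := by
  obtain ⟨Y, tY, Z, tZ, hZ, ⟨k, hk, hksurj⟩, hg⟩ := hX
  exact ⟨Y, tY, Z, tZ, hZ, ⟨f ∘ k, hf.comp hk, hsurj.comp hksurj⟩, hg⟩

theorem prod (hX : IsLindelofSigma X) (hX' : IsLindelofSigma X') : IsLindelofSigma (X × X') := by
  obtain ⟨Y, tY, Z, tZ, hZ, ⟨f, hf, hfsurj⟩, ⟨g, hg, hgsurj⟩⟩ := hX
  obtain ⟨Y', tY', Z', tZ', hZ', ⟨f', hf', hfsurj'⟩, ⟨g', hg', hgsurj'⟩⟩ := hX'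
  rw [perfectMap_iff_isProperMap] at hg hg'
  exact ⟨Y × Y', inferInstance, Z × Z', inferInstance, inferInstance,
    ⟨Prod.map f f', hf.prodMap hf', hfsurj.prodMap hfsurj'⟩,
    ⟨Prod.map g g', perfectMap_iff_isProperMap.2 (hg.prodMap hg'), hgsurj.prodMap hgsurj'⟩⟩

theorem sigma {ι : Type} [Countable ι] {X : ι → Type u} [∀ i, TopologicalSpace (X i)]
    (hX : ∀ i, IsLindelofSigma (X i)) : IsLindelofSigma (Σ i, X i) := by
  choose Y tY Z tZ hZ hf hg using hX
  choose f hf hfsurj using hf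
  choose g hg hgsurj using hg
  exact ⟨Σ i, Y i, inferInstance, Σ i, Z i, inferInstance, inferInstance,
    ⟨Sigma.map id f, .sigma_map hf, surjective_id.sigma_map hfsurj⟩,
    ⟨Sigma.map id g, perfectMap_iff_isProperMap.2 <|
        isProperMap_sigmaMap fun i => perfectMap_iff_isProperMap.1 (hg i),
      surjective_id.sigma_map hgsurj⟩⟩

theorem lindelofSpace (hX : IsLindelofSigma X) : LindelofSpace X := by
  obtain ⟨Y, tY, Z, tZ, hZ, ⟨f, hf, hfsurj⟩, ⟨g, hg, -⟩⟩ := hX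
  have : LindelofSpace Y := lindelofSpace_of_isProperMap (perfectMap_iff_isProperMap.1 hg)
  exact .of_continuous_surjective hf hfsurj

theorem isLindelof {S : Set X} (hS : IsLindelofSigma S) : IsLindelof S :=
  isLindelof_iff_lindelofSpace.2 hS.lindelofSpace

theorem image {S : Set X} (hS : IsLindelofSigma S) {f : X → X'} (hf : Continuous f) :
    IsLindelofSigma ↥(f '' S) :=
  hS.of_surjective (hf.continuousOn.mapsToRestrict (mapsTo_image f S))
    (surjective_mapsTo_image_restrict f S)

theorem setProd {S : Set X} {T : Set X'} (hS : IsLindelofSigma S) (hT : IsLindelofSigma T) :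
    IsLindelofSigma ↥(S ×ˢ T) :=
  (hS.prod hT).of_surjective (Homeomorph.Set.prod S T).symm.continuous
    (Homeomorph.Set.prod S T).symm.surjective

theorem iUnion {ι : Type*} [Countable ι] {S : ι → Set X} (hS : ∀ i, IsLindelofSigma (S i)) :
    IsLindelofSigma ↥(⋃ i, S i) := by
  -- Reindexing by a type in `Type` keeps the disjoint union in the universe of `X`.
  let r : Shrink.{0} ι ≃ ι := (equivShrink.{0} ι).symm
  have : Countable (Shrink.{0} ι) := r.injective.countable
  rw [← r.surjective.iUnion_comp S]
  exact (sigma fun j => hS (r j)).of_surjective (f := sigmaToiUnion fun j => S (r j))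
    (continuous_sigma fun j => continuous_inclusion (subset_iUnion (fun j => S (r j)) j))
    (sigmaToiUnion_surjective fun j => S (r j))

theorem biUnion {ι : Type*} {I : Set ι} (hI : I.Countable) {S : ι → Set X}
    (hS : ∀ i ∈ I, IsLindelofSigma (S i)) : IsLindelofSigma ↥(⋃ i ∈ I, S i) := by
  have := hI.to_subtype
  rw [biUnion_eq_iUnion]
  exact iUnion fun i => hS i i.2

theorem union {S T : Set X} (hS : IsLindelofSigma S) (hT : IsLindelofSigma T) :
    IsLindelofSigma ↥(S ∪ T) := by
  rw [union_eq_iUnion]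
  exact iUnion (Bool.forall_bool.2 ⟨hT, hS⟩)

theorem univ_of_forall_mem_nhds [LindelofSpace X] {N : X → Set X} (hN : ∀ x, N x ∈ 𝓝 x)
    (hNσ : ∀ x, IsLindelofSigma (N x)) : IsLindelofSigma (univ : Set X) := by
  obtain ⟨t, ht, hcover⟩ := countable_cover_nhds hN
  rw [← hcover]
  exact biUnion ht fun x _ => hNσ x

end IsLindelofSigma

section GeneratedSubset

variable {ι : Type*} {X : Type u}

/-- The elements obtained from `S` by applying the binary operations `ops` with nesting depth at
most `n`. The union over `n` is the subset generated by `S` under `ops`. -/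
def generatedStage (ops : ι → X × X → X) (S : Set X) : ℕ → Set X
  | 0 => S
  | n + 1 => generatedStage ops S n ∪
      ⋃ i, ops i '' (generatedStage ops S n ×ˢ generatedStage ops S n)

theorem monotone_generatedStage (ops : ι → X × X → X) (S : Set X) :
    Monotone (generatedStage ops S) :=
  monotone_nat_of_le_succ fun _ => subset_union_left

theorem mapsTo_iUnion_generatedStage (ops : ι → X × X → X) (S : Set X) (i : ι) :
    MapsTo (ops i) ((⋃ n, generatedStage ops S n) ×ˢ ⋃ n, generatedStage ops S n)
      (⋃ n, generatedStage ops S n) := by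
  rw [← iUnion_prod_of_monotone (monotone_generatedStage ops S) (monotone_generatedStage ops S)]
  refine mapsTo_iUnion.2 fun n xy hxy => mem_iUnion.2 ⟨n + 1, Or.inr ?_⟩
  exact mem_iUnion.2 ⟨i, mem_image_of_mem _ hxy⟩

theorem isLindelofSigma_generatedStage [TopologicalSpace X] [Countable ι] {S : Set X}
    (hS : IsLindelofSigma S) {ops : ι → X × X → X} (hops : ∀ i, Continuous (ops i)) :
    ∀ n, IsLindelofSigma ↥(generatedStage ops S n)
  | 0 => hS
  | n + 1 =>
    have ih := isLindelofSigma_generatedStage hS hops n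
    ih.union (.iUnion fun i => (ih.setProd ih).image (hops i))

theorem IsLindelofSigma.exists_superset_mapsTo [TopologicalSpace X] [Countable ι] {S : Set X}
    (hS : IsLindelofSigma S) {ops : ι → X × X → X} (hops : ∀ i, Continuous (ops i)) :
    ∃ T ⊇ S, IsLindelofSigma T ∧ ∀ i, MapsTo (ops i) (T ×ˢ T) T :=
  ⟨⋃ n, generatedStage ops S n, subset_iUnion (generatedStage ops S) 0,
    .iUnion (isLindelofSigma_generatedStage hS hops), mapsTo_iUnion_generatedStage ops S⟩

end GeneratedSubset

namespace IsCharming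

variable {X : Type u} [TopologicalSpace X]

theorem lindelofSpace (hX : IsCharming X) : LindelofSpace X := by
  obtain ⟨Y, hY, hcompl⟩ := hX
  refine ⟨isLindelof_of_countable_subcover fun U hU hcover => ?_⟩
  obtain ⟨r, hr, hYr⟩ := hY.isLindelof.elim_countable_subcover U hU ((subset_univ _).trans hcover)
  have hrest := (hcompl _ (isOpen_biUnion fun i (_ : i ∈ r) => hU i) hYr).isLindelof
  obtain ⟨s, hs, hrs⟩ := hrest.elim_countable_subcover U hU ((subset_univ _).trans hcover)
  refine ⟨r ∪ s, hr.union hs, ?_⟩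
  rw [biUnion_union]
  exact (compl_subset_iff_union.1 hrs).ge

theorem exists_dense_or_exists_mem_nhds [RegularSpace X] (hX : IsCharming X) :
    (∃ D : Set X, Dense D ∧ IsLindelofSigma D) ∨ ∃ a : X, ∃ C ∈ 𝓝 a, IsLindelofSigma C := by
  obtain ⟨Y, hY, hcompl⟩ := hX
  by_cases hdense : Dense Y
  · exact .inl ⟨Y, hdense, hY⟩
  obtain ⟨a, ha⟩ : ∃ a, a ∉ closure Y := not_forall.1 hdense
  obtain ⟨C, hCa, hC, hCY⟩ := exists_mem_nhds_isClosed_subset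
    (isClosed_closure.isOpen_compl.mem_nhds ha)
  have hYC : Y ⊆ Cᶜ := subset_compl_comm.1 (hCY.trans (compl_subset_compl.2 subset_closure))
  exact .inr ⟨a, C, hCa, compl_compl C ▸ hcompl Cᶜ hC.isOpen_compl hYC⟩

end IsCharming

/-- The operations `p`, `q` and the right neutral element `e` of a rectification. The map
`(x, y) ↦ (x, q (x, y))`, with inverse `(x, y) ↦ (x, p (x, y))`, recovers the homeomorphism of
`G × G`. -/
structure IsRectification {G : Type*} [TopologicalSpace G] (p q : G × G → G) (e : G) : Prop where
  continuous_p : Continuous p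
  continuous_q : Continuous q
  p_q : ∀ x y, p (x, q (x, y)) = y
  q_p : ∀ x y, q (x, p (x, y)) = y
  q_self : ∀ x, q (x, x) = e

namespace IsRectification

variable {G : Type*} [TopologicalSpace G]

theorem of_homeomorph (φ : G × G ≃ₜ G × G) {e : G} (hπ : ∀ z, (φ z).1 = z.1)
    (hφ : ∀ x, φ (x, x) = (x, e)) :
    IsRectification (fun z => (φ.symm z).2) (fun z => (φ z).2) e where
  continuous_p := by fun_prop
  continuous_q := by fun_prop
  p_q x y := by
    have : (x, (φ (x, y)).2) = φ (x, y) := Prod.ext (hπ (x, y)).symm rfl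
    simp only [this, φ.symm_apply_apply]
  q_p x y := by
    have hπ_symm : (φ.symm (x, y)).1 = x := by rw [← hπ, φ.apply_symm_apply]
    have : (x, (φ.symm (x, y)).2) = φ.symm (x, y) := Prod.ext hπ_symm.symm rfl
    simp only [this, φ.apply_symm_apply]
  q_self x := by rw [hφ]

variable {p q : G × G → G} {e : G}

theorem p_neutral (h : IsRectification p q e) (x : G) : p (x, e) = x := by
  rw [← h.q_self x, h.p_q]

/-- The self-homeomorphism `z ↦ p (x, q (a, z))` of a rectifiable space, which moves `a` to `x`;
for a topological group it is left translation by `x * a⁻¹`. -/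
def translation (h : IsRectification p q e) (a x : G) : G ≃ₜ G where
  toFun z := p (x, q (a, z))
  invFun w := p (a, q (x, w))
  left_inv z := by simp only [h.q_p, h.p_q]
  right_inv w := by simp only [h.q_p, h.p_q]
  continuous_toFun := by have := h.continuous_p; have := h.continuous_q; fun_prop
  continuous_invFun := by have := h.continuous_p; have := h.continuous_q; fun_prop

theorem translation_apply_self (h : IsRectification p q e) (a x : G) :
    h.translation a x a = x :=
  calc p (x, q (a, a)) = p (x, e) := by rw [h.q_self]
    _ = x := h.p_neutral x

theorem regularSpace (h : IsRectification p q e) : RegularSpace G := by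
  refine .of_exists_mem_nhds_isClosed_subset fun a U hU => ?_
  have hp : p ⁻¹' U ∈ 𝓝 (a, e) :=
    h.continuous_p.continuousAt.preimage_mem_nhds (by rwa [h.p_neutral])
  obtain ⟨V, hV, W, hW, hVW⟩ := mem_nhds_prod_iff.1 hp
  refine ⟨closure V, Filter.mem_of_superset hV subset_closure, isClosed_closure, fun z hz => ?_⟩
  -- The neighbourhoods `{w | q (w, z) ∈ W}` of `z` are chosen because `z = p (w, q (w, z))`.
  have hz_nhds : {w | q (w, z) ∈ W} ∈ 𝓝 z :=
    (h.continuous_q.comp (.prodMk_left z)).continuousAt.preimage_mem_nhds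
      (by rwa [comp_apply, h.q_self])
  obtain ⟨w, hwW, hwV⟩ := mem_closure_iff_nhds.1 hz _ hz_nhds
  have : p (w, q (w, z)) ∈ U := hVW (mk_mem_prod hwV hwW)
  rwa [h.p_q] at this

theorem isLindelofSigma_univ_of_mem_nhds {G : Type u} [TopologicalSpace G] [LindelofSpace G]
    {p q : G × G → G} {e a : G} (h : IsRectification p q e) {C : Set G} (hCa : C ∈ 𝓝 a)
    (hC : IsLindelofSigma C) : IsLindelofSigma (univ : Set G) := by
  refine .univ_of_forall_mem_nhds (N := fun x => h.translation a x '' C) (fun x => ?_)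
    fun x => hC.image (h.translation a x).continuous
  simpa only [h.translation_apply_self] using (h.translation a x).isOpenMap.image_mem_nhds hCa

end IsRectification

theorem charming_rectifiable_dense_lindelofSigma_subspace_general {G : Type u}
    [TopologicalSpace G] {p q : G × G → G} {e : G} (h : IsRectification p q e)
    (hG : IsCharming G) :
    ∃ H : Set G, Dense H ∧ e ∈ H ∧
      (∀ x ∈ H, ∀ y ∈ H, p (x, y) ∈ H) ∧
      (∀ x ∈ H, ∀ y ∈ H, q (x, y) ∈ H) ∧
      IsLindelofSigma ↥H := by
  have := h.regularSpace
  have := hG.lindelofSpace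
  obtain ⟨D, hD, hDσ⟩ : ∃ D : Set G, Dense D ∧ IsLindelofSigma D := by
    rcases hG.exists_dense_or_exists_mem_nhds with hdense | ⟨a, C, hCa, hC⟩
    · exact hdense
    · exact ⟨univ, dense_univ, h.isLindelofSigma_univ_of_mem_nhds hCa hC⟩
  obtain ⟨H, hDH, hHσ, hops⟩ := hDσ.exists_superset_mapsTo (ops := ![p, q])
    (Fin.forall_fin_two.2 ⟨h.continuous_p, h.continuous_q⟩)
  have hp : ∀ x ∈ H, ∀ y ∈ H, p (x, y) ∈ H := fun x hx y hy => hops 0 (mk_mem_prod hx hy)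
  have hq : ∀ x ∈ H, ∀ y ∈ H, q (x, y) ∈ H := fun x hx y hy => hops 1 (mk_mem_prod hx hy)
  have hH : Dense H := hD.mono hDH
  have : Nonempty G := ⟨e⟩
  obtain ⟨x, hx⟩ := hH.nonempty
  exact ⟨H, hH, h.q_self x ▸ hq x hx x hx, hp, hq, hHσ⟩

/-- Every charming rectifiable space has a dense rectifiable subspace that is a
Lindelöf Σ-space. -/
theorem charming_rectifiable_dense_lindelofSigma_subspace {G : Type u}
    [TopologicalSpace G] [T35Space G]
    (φ : G × G ≃ₜ G × G) (e : G)
    (hπ : ∀ z : G × G, (φ z).1 = z.1)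
    (hφ : ∀ x : G, φ (x, x) = (x, e))
    (p q : G × G → G)
    (hp : p = fun z => (φ.symm z).2)
    (hq : q = fun z => (φ z).2)
    (hG : IsCharming G) :
    ∃ H : Set G, Dense H ∧ e ∈ H ∧
      (∀ x ∈ H, ∀ y ∈ H, p (x, y) ∈ H) ∧
      (∀ x ∈ H, ∀ y ∈ H, q (x, y) ∈ H) ∧
      IsLindelofSigma ↥H := by
  subst hp hq
  exact charming_rectifiable_dense_lindelofSigma_subspace_general
    (.of_homeomorph φ hπ hφ) hG
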